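/- Let P0 be an algebraic null hypothesis, i.e. P0 = Δ_{k-1} ∩ {π : g(π) = 0 for all g ∈ G} for a family G of real polynomials in k variables, with ∅ ≠ P0 ≠ Δ_{k-1}, and let PA = Δ_{k-1} \ P0. Then: (i) there exists an NTUB test of P0 of sample size n if and only if there exists a real polynomial β̃ in k variables of total degree at most n that is not identically zero on Δ_{k-1}, vanishes at every point of P0, and satisfies β̃(π) ≥ 0 for all π ∈ PA; (ii) there exists an SUB test of P0 of sample size n if and only if there exists such a β̃ that moreover satisfies β̃(π) > 0 for all π ∈ PA. -/

import Mathlib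

open Finset

/-- The probability simplex on a finite index set `ι`. -/
def probSimplex (ι : Type) [Fintype ι] : Set (ι → ℝ) :=
  {π | (∀ i, 0 ≤ π i) ∧ ∑ i, π i = 1}

/-- Count vectors of sample size `n`: functions `x : ι → ℕ` with `∑ i, x i = n`. -/
def countVecs (ι : Type) [Fintype ι] [DecidableEq ι] (n : ℕ) : Finset (ι → ℕ) :=
  (Fintype.piFinset fun _ : ι => Finset.range (n + 1)).filter fun x => ∑ i, x i = n

/-- A (randomized) test of sample size `n`: values in `[0,1]` on all count vectors. -/
def IsTest (ι : Type) [Fintype ι] [DecidableEq ι] (n : ℕ) (φ : (ι → ℕ) → ℝ) : Prop :=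
  ∀ x ∈ countVecs ι n, 0 ≤ φ x ∧ φ x ≤ 1

/-- The power function of a test. -/
noncomputable def powerFn (ι : Type) [Fintype ι] [DecidableEq ι] (n : ℕ)
    (φ : (ι → ℕ) → ℝ) (π : ι → ℝ) : ℝ :=
  ∑ x ∈ countVecs ι n, φ x * (Nat.multinomial Finset.univ x : ℝ) * ∏ i, π i ^ x i

/-- Unbiasedness relative to the null hypothesis `P0`. -/
def Unbiased (ι : Type) [Fintype ι] [DecidableEq ι] (n : ℕ) (P0 : Set (ι → ℝ))
    (φ : (ι → ℕ) → ℝ) : Prop :=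
  ∀ π0 ∈ P0, ∀ πA ∈ probSimplex ι \ P0, powerFn ι n φ π0 ≤ powerFn ι n φ πA

/-- Non-trivial unbiased test: unbiased with non-constant power on the simplex. -/
def IsNTUB (ι : Type) [Fintype ι] [DecidableEq ι] (n : ℕ) (P0 : Set (ι → ℝ))
    (φ : (ι → ℕ) → ℝ) : Prop :=
  Unbiased ι n P0 φ ∧
    ∃ π ∈ probSimplex ι, ∃ π' ∈ probSimplex ι, powerFn ι n φ π ≠ powerFn ι n φ π'

/-- Strictly unbiased test. -/
def IsSUB (ι : Type) [Fintype ι] [DecidableEq ι] (n : ℕ) (P0 : Set (ι → ℝ))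
    (φ : (ι → ℕ) → ℝ) : Prop :=
  ∀ π0 ∈ P0, ∀ πA ∈ probSimplex ι \ P0, powerFn ι n φ π0 < powerFn ι n φ πA

/-- Level-`α` test. -/
def IsLevel (ι : Type) [Fintype ι] [DecidableEq ι] (n : ℕ) (P0 : Set (ι → ℝ)) (α : ℝ)
    (φ : (ι → ℕ) → ℝ) : Prop :=
  ∀ π ∈ P0, powerFn ι n φ π ≤ α

/-- A test has size `α` if the supremum of its power over `P0` is `α`. -/
def HasSize (ι : Type) [Fintype ι] [DecidableEq ι] (n : ℕ) (P0 : Set (ι → ℝ)) (α : ℝ)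
    (φ : (ι → ℕ) → ℝ) : Prop :=
  IsLUB (powerFn ι n φ '' P0) α

/-- Uniformly most powerful unbiased level-`α` test. -/
def IsUMPU (ι : Type) [Fintype ι] [DecidableEq ι] (n : ℕ) (P0 : Set (ι → ℝ)) (α : ℝ)
    (φ : (ι → ℕ) → ℝ) : Prop :=
  IsLevel ι n P0 α φ ∧ Unbiased ι n P0 φ ∧
    ∀ ψ, IsTest ι n ψ → IsLevel ι n P0 α ψ → Unbiased ι n P0 ψ →
      ∀ πA ∈ probSimplex ι \ P0, powerFn ι n ψ πA ≤ powerFn ι n φ πA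

/-!
Multinomial coefficients being nonzero, the power functions of all real-valued `φ` on count vectors
are exactly the forms of degree `n`. On the simplex every polynomial of degree at most `n` agrees
with such a form, because its homogeneous components may be multiplied by powers of `∑ i, π i = 1`.
Replacing `φ` by `1 / 2 + e * φ` with `e > 0` small makes it a test and, by the multinomial theorem,
changes the power by an increasing affine map only. So tests may be traded for polynomials of degree
at most `n`, and the one remaining point is that an unbiased test has constant power on `P0`. This
follows by continuity as soon as every point of `P0` is a limit of alternatives, and a proper
algebraic subset `P0` has this property: on a segment ending at an alternative, one of the defining
polynomials has only finitely many zeros.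
-/

open Filter MvPolynomial Topology

section Density

variable {E F : Type*} [NormedAddCommGroup E] [NormedSpace ℝ E]
  [NormedAddCommGroup F] [NormedSpace ℝ F]

lemma starConvex_subset_closure_ne_zero {s : Set E} {q : E} (hs : StarConvex ℝ q s) {f : E → F}
    (hf : AnalyticOnNhd ℝ f s) (hq : f q ≠ 0) :
    s ⊆ closure {x ∈ s | f x ≠ 0} := by
  intro p hp
  let line : ℝ → E := AffineMap.lineMap p q
  have hline_mem : Set.MapsTo line (Set.Icc 0 1) s := fun t ht ↦
    hs.segment_subset hp (segment_symm ℝ p q ▸ lineMap_mem_segment ℝ p q ht)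
  have hline_analytic : AnalyticOnNhd ℝ line (Set.Icc 0 1) := fun t _ ↦ by
    simp only [line, AffineMap.coe_lineMap, vsub_eq_sub, vadd_eq_add]
    fun_prop
  have hne : ∀ᶠ t in 𝓝[≠] (0 : ℝ), f (line t) ≠ 0 := by
    by_contra hfreq
    have hzero := (hf.comp hline_analytic hline_mem).eqOn_zero_of_preconnected_of_frequently_eq_zero
      isPreconnected_Icc (Set.left_mem_Icc.2 zero_le_one) (by simpa using hfreq)
    exact hq (by simpa [line] using hzero (Set.right_mem_Icc.2 zero_le_one))
  have htendsto : Tendsto line (𝓝[>] 0) (𝓝 p) :=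
    (AffineMap.lineMap_continuous.tendsto' 0 p (AffineMap.lineMap_apply_zero p q)).mono_left
      nhdsWithin_le_nhds
  refine mem_closure_of_tendsto htendsto ?_
  filter_upwards [hne.filter_mono (nhdsGT_le_nhdsNE 0), Ioc_mem_nhdsGT one_pos] with t ht htI
  exact ⟨hline_mem ⟨htI.1.le, htI.2⟩, ht⟩

lemma inter_zeros_subset_closure_diff {ι : Type*} [Finite ι] {s : Set (ι → ℝ)}
    (hs : Convex ℝ s) (G : Set (MvPolynomial ι ℝ))
    (hG : s ∩ {x | ∀ g ∈ G, eval x g = 0} ≠ s) :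
    s ∩ {x | ∀ g ∈ G, eval x g = 0} ⊆ closure (s \ (s ∩ {x | ∀ g ∈ G, eval x g = 0})) := by
  have := Fintype.ofFinite ι
  obtain ⟨q, hq, g, hgG, hgq⟩ : ∃ q ∈ s, ∃ g ∈ G, eval q g ≠ 0 := by
    by_contra! hzero
    exact hG (Set.inter_eq_left.2 hzero)
  have hdense : s ⊆ closure {x ∈ s | eval x g ≠ 0} := starConvex_subset_closure_ne_zero (hs hq)
    ((AnalyticOnNhd.eval_mvPolynomial g).mono (Set.subset_univ s)) hgq
  refine Set.inter_subset_left.trans (hdense.trans (closure_mono ?_))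
  exact fun x hx ↦ ⟨hx.1, fun hzero ↦ hx.2 (hzero.2 g hgG)⟩

end Density

section Homogenization

variable {σ R : Type*} [Fintype σ] [CommSemiring R]

/-- The form of degree `n` obtained from `p` by multiplying each homogeneous component of degree
`d ≤ n` by `(∑ i, X i) ^ (n - d)`. When `p` has degree at most `n`, it agrees with `p` on the
hyperplane `∑ i, π i = 1`; components of degree above `n` are discarded. -/
noncomputable def sumHomogenization (n : ℕ) (p : MvPolynomial σ R) : MvPolynomial σ R :=
  ∑ d ∈ range (n + 1), homogeneousComponent d p * (∑ i, X i) ^ (n - d)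

lemma isHomogeneous_sumHomogenization (n : ℕ) (p : MvPolynomial σ R) :
    (sumHomogenization n p).IsHomogeneous n := by
  refine IsHomogeneous.sum _ _ _ fun d hd ↦ ?_
  have hsum : (∑ i, X i : MvPolynomial σ R).IsHomogeneous 1 :=
    IsHomogeneous.sum _ _ _ fun i _ ↦ isHomogeneous_X R i
  convert! (homogeneousComponent_isHomogeneous d p).mul (hsum.pow (n - d)) using 1
  rw [one_mul, Nat.add_sub_cancel' (mem_range_succ_iff.1 hd)]

lemma eval_sumHomogenization {n : ℕ} {p : MvPolynomial σ R} (hp : p.totalDegree ≤ n)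
    {π : σ → R} (hπ : ∑ i, π i = 1) : eval π (sumHomogenization n p) = eval π p := by
  have hcomponents : ∑ d ∈ range (n + 1), homogeneousComponent d p = p := by
    conv_rhs => rw [← sum_homogeneousComponent p]
    refine (sum_subset (range_subset_range.2 (by lia)) fun d _ hd ↦ ?_).symm
    exact homogeneousComponent_eq_zero d p (by simpa using hd)
  calc eval π (sumHomogenization n p)
      = eval π (∑ d ∈ range (n + 1), homogeneousComponent d p) := by
        simp [sumHomogenization, hπ]
    _ = eval π p := by rw [hcomponents]

end Homogenization

lemma convex_probSimplex (ι : Type) [Fintype ι] : Convex ℝ (probSimplex ι) :=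
  convex_stdSimplex ℝ ι

section PowerFunction

variable {ι : Type} [Fintype ι] [DecidableEq ι] {n : ℕ}

lemma countVecs_eq_piAntidiag (n : ℕ) : countVecs ι n = piAntidiag univ n := by
  ext x
  simp only [countVecs, mem_filter, Fintype.mem_piFinset, mem_range_succ_iff, mem_piAntidiag,
    mem_univ, implies_true, and_true, and_iff_right_iff_imp]
  exact fun hx i ↦ hx ▸ single_le_sum_of_canonicallyOrdered (mem_univ i)

lemma mem_countVecs {x : ι → ℕ} : x ∈ countVecs ι n ↔ ∑ i, x i = n := by
  simp [countVecs_eq_piAntidiag]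

lemma powerFn_affine (c e : ℝ) (φ : (ι → ℕ) → ℝ) {π : ι → ℝ} (hπ : ∑ i, π i = 1) :
    powerFn ι n (fun x ↦ c + e * φ x) π = c + e * powerFn ι n φ π := by
  have htotal : ∑ x ∈ countVecs ι n, (Nat.multinomial univ x : ℝ) * ∏ i, π i ^ x i = 1 := by
    rw [countVecs_eq_piAntidiag, ← sum_pow_eq_sum_piAntidiag, hπ, one_pow]
  simp only [powerFn, add_mul, mul_assoc, sum_add_distrib, ← mul_sum, htotal, mul_one]

lemma continuous_powerFn (φ : (ι → ℕ) → ℝ) : Continuous (powerFn ι n φ) := by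
  unfold powerFn
  fun_prop

/-- The power function of `φ` as a polynomial in the cell probabilities. -/
noncomputable def powerPoly (n : ℕ) (φ : (ι → ℕ) → ℝ) : MvPolynomial ι ℝ :=
  ∑ x ∈ countVecs ι n, monomial (Finsupp.equivFunOnFinite.symm x) (φ x * Nat.multinomial univ x)

lemma eval_powerPoly (φ : (ι → ℕ) → ℝ) (π : ι → ℝ) :
    eval π (powerPoly n φ) = powerFn ι n φ π := by
  simp [powerPoly, powerFn, eval_monomial, Finsupp.prod_fintype]

lemma isHomogeneous_powerPoly (φ : (ι → ℕ) → ℝ) : (powerPoly n φ).IsHomogeneous n :=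
  IsHomogeneous.sum _ _ _ fun x hx ↦
    isHomogeneous_monomial _ (by simpa [Finsupp.degree_eq_sum] using mem_countVecs.1 hx)

lemma coeff_powerPoly (φ : (ι → ℕ) → ℝ) {d : ι →₀ ℕ} (hd : d.degree = n) :
    coeff d (powerPoly n φ) = φ d * Nat.multinomial univ d := by
  have hmem : ⇑d ∈ countVecs ι n := mem_countVecs.2 (by rw [← hd, Finsupp.degree_eq_sum])
  simp only [powerPoly, coeff_sum, coeff_monomial, Equiv.symm_apply_eq, sum_ite_eq']
  exact if_pos hmem

lemma exists_powerPoly_eq {p : MvPolynomial ι ℝ} (hp : p.IsHomogeneous n) :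
    ∃ φ, powerPoly n φ = p := by
  refine ⟨fun x ↦ coeff (Finsupp.equivFunOnFinite.symm x) p / Nat.multinomial univ x, ?_⟩
  ext d
  by_cases hd : d.degree = n
  · have hpos : (Nat.multinomial univ d : ℝ) ≠ 0 := mod_cast (Nat.multinomial_pos _ _).ne'
    simp [coeff_powerPoly _ hd, hpos]
  · rw [(isHomogeneous_powerPoly _).coeff_eq_zero hd, hp.coeff_eq_zero hd]

lemma exists_powerFn_eq_eval {β : MvPolynomial ι ℝ} (hβ : β.totalDegree ≤ n) :
    ∃ φ, ∀ π ∈ probSimplex ι, powerFn ι n φ π = eval π β := by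
  obtain ⟨φ, hφ⟩ := exists_powerPoly_eq (isHomogeneous_sumHomogenization n β)
  exact ⟨φ, fun π hπ ↦ by rw [← eval_powerPoly, hφ, eval_sumHomogenization hβ hπ.2]⟩

lemma exists_isTest_half_add_mul (φ : (ι → ℕ) → ℝ) :
    ∃ e > 0, IsTest ι n fun x ↦ 1 / 2 + e * φ x := by
  let M : ℝ := ∑ x ∈ countVecs ι n, |φ x| + 1
  have hM : 0 < M := by positivity
  refine ⟨1 / (2 * M), by positivity, fun x hx ↦ ?_⟩
  have hφM : |φ x| ≤ M :=
    (single_le_sum (fun y _ ↦ abs_nonneg (φ y)) hx).trans (le_add_of_nonneg_right zero_le_one)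
  have hsmall : |1 / (2 * M) * φ x| ≤ 1 / 2 := by
    calc |1 / (2 * M) * φ x| = 1 / (2 * M) * |φ x| := by rw [abs_mul, abs_of_pos (by positivity)]
      _ ≤ 1 / (2 * M) * M := by gcongr
      _ = 1 / 2 := by field_simp
  constructor <;> linarith [abs_le.1 hsmall]

end PowerFunction

section UnbiasedTests

variable {ι : Type} [Fintype ι] [DecidableEq ι] {n : ℕ} {P0 : Set (ι → ℝ)} {φ : (ι → ℕ) → ℝ}
  {β : MvPolynomial ι ℝ} {π π' : ι → ℝ}

/-- On the simplex, the power function of `φ` is an increasing affine function of the polynomial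
`β`; the two then order the points of the simplex in the same way. -/
def HasAffinePower (n : ℕ) (φ : (ι → ℕ) → ℝ) (β : MvPolynomial ι ℝ) : Prop :=
  ∃ c, ∃ e > 0, ∀ π ∈ probSimplex ι, powerFn ι n φ π = c + e * eval π β

namespace HasAffinePower

lemma powerFn_le_iff (h : HasAffinePower n φ β) (hπ : π ∈ probSimplex ι)
    (hπ' : π' ∈ probSimplex ι) :
    powerFn ι n φ π ≤ powerFn ι n φ π' ↔ eval π β ≤ eval π' β := by
  obtain ⟨c, e, he, hφ⟩ := h
  rw [hφ π hπ, hφ π' hπ', add_le_add_iff_left, mul_le_mul_iff_right₀ he]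

lemma powerFn_lt_iff (h : HasAffinePower n φ β) (hπ : π ∈ probSimplex ι)
    (hπ' : π' ∈ probSimplex ι) :
    powerFn ι n φ π < powerFn ι n φ π' ↔ eval π β < eval π' β := by
  simpa only [not_le] using (h.powerFn_le_iff hπ' hπ).not

lemma powerFn_eq_iff (h : HasAffinePower n φ β) (hπ : π ∈ probSimplex ι)
    (hπ' : π' ∈ probSimplex ι) :
    powerFn ι n φ π = powerFn ι n φ π' ↔ eval π β = eval π' β := by
  simp only [le_antisymm_iff, h.powerFn_le_iff hπ hπ', h.powerFn_le_iff hπ' hπ]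

lemma unbiased_iff (h : HasAffinePower n φ β) (hsub : P0 ⊆ probSimplex ι) (hne : P0.Nonempty)
    (hzero : ∀ π ∈ P0, eval π β = 0) :
    Unbiased ι n P0 φ ↔ ∀ π ∈ probSimplex ι \ P0, 0 ≤ eval π β := by
  obtain ⟨π₀, hπ₀⟩ := hne
  constructor
  · intro hφ π hπ
    simpa only [h.powerFn_le_iff (hsub hπ₀) hπ.1, hzero π₀ hπ₀] using hφ π₀ hπ₀ π hπ
  · intro hβ π hπ π' hπ'
    simpa only [h.powerFn_le_iff (hsub hπ) hπ'.1, hzero π hπ] using hβ π' hπ'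

lemma isSUB_iff (h : HasAffinePower n φ β) (hsub : P0 ⊆ probSimplex ι) (hne : P0.Nonempty)
    (hzero : ∀ π ∈ P0, eval π β = 0) :
    IsSUB ι n P0 φ ↔ ∀ π ∈ probSimplex ι \ P0, 0 < eval π β := by
  obtain ⟨π₀, hπ₀⟩ := hne
  constructor
  · intro hφ π hπ
    simpa only [h.powerFn_lt_iff (hsub hπ₀) hπ.1, hzero π₀ hπ₀] using hφ π₀ hπ₀ π hπ
  · intro hβ π hπ π' hπ'
    simpa only [h.powerFn_lt_iff (hsub hπ) hπ'.1, hzero π hπ] using hβ π' hπ'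

lemma isNTUB_iff (h : HasAffinePower n φ β) (hsub : P0 ⊆ probSimplex ι) (hne : P0.Nonempty)
    (hzero : ∀ π ∈ P0, eval π β = 0) :
    IsNTUB ι n P0 φ ↔ (∃ π ∈ probSimplex ι, eval π β ≠ 0) ∧
      ∀ π ∈ probSimplex ι \ P0, 0 ≤ eval π β := by
  rw [IsNTUB, h.unbiased_iff hsub hne hzero, and_comm]
  refine and_congr_left fun _ ↦ ⟨?_, ?_⟩
  · rintro ⟨π, hπ, π', hπ', hpower⟩
    by_contra! hβ
    exact hpower ((h.powerFn_eq_iff hπ hπ').2 ((hβ π hπ).trans (hβ π' hπ').symm))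
  · rintro ⟨π, hπ, hβ⟩
    obtain ⟨π₀, hπ₀⟩ := hne
    refine ⟨π, hπ, π₀, hsub hπ₀, ?_⟩
    rwa [Ne, h.powerFn_eq_iff hπ (hsub hπ₀), hzero π₀ hπ₀]

end HasAffinePower

lemma exists_isTest_hasAffinePower (hβ : β.totalDegree ≤ n) :
    ∃ φ, IsTest ι n φ ∧ HasAffinePower n φ β := by
  obtain ⟨ψ, hψ⟩ := exists_powerFn_eq_eval hβ
  obtain ⟨e, he, htest⟩ := exists_isTest_half_add_mul (n := n) ψ
  exact ⟨_, htest, 1 / 2, e, he, fun π hπ ↦ by rw [powerFn_affine _ _ _ hπ.2, hψ π hπ]⟩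

lemma Unbiased.powerFn_eq (hφ : Unbiased ι n P0 φ) (hP0 : P0 ⊆ closure (probSimplex ι \ P0))
    (hπ : π ∈ P0) (hπ' : π' ∈ P0) : powerFn ι n φ π = powerFn ι n φ π' := by
  have hle : ∀ ρ ∈ P0, ∀ ρ' ∈ P0, powerFn ι n φ ρ ≤ powerFn ι n φ ρ' := fun ρ hρ ρ' hρ' ↦
    closure_minimal (hφ ρ hρ) (isClosed_le continuous_const (continuous_powerFn φ)) (hP0 hρ')
  exact (hle π hπ π' hπ').antisymm (hle π' hπ' π hπ)

lemma Unbiased.exists_hasAffinePower (hφ : Unbiased ι n P0 φ) (hne : P0.Nonempty)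
    (hP0 : P0 ⊆ closure (probSimplex ι \ P0)) :
    ∃ β : MvPolynomial ι ℝ, β.totalDegree ≤ n ∧ (∀ π ∈ P0, eval π β = 0) ∧
      HasAffinePower n φ β := by
  obtain ⟨π₀, hπ₀⟩ := hne
  refine ⟨powerPoly n φ - C (powerFn ι n φ π₀), ?_, fun π hπ ↦ ?_, powerFn ι n φ π₀, 1, one_pos,
    fun π _ ↦ ?_⟩
  · exact (totalDegree_sub_C_le _ _).trans (isHomogeneous_powerPoly φ).totalDegree_le
  · rw [map_sub, eval_powerPoly, eval_C, hφ.powerFn_eq hP0 hπ hπ₀, sub_self]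
  · rw [map_sub, eval_powerPoly, eval_C, one_mul, add_sub_cancel]

theorem stmt_6_general (n : ℕ) (hsub : P0 ⊆ probSimplex ι) (hne : P0.Nonempty)
    (hP0 : P0 ⊆ closure (probSimplex ι \ P0)) :
    ((∃ φ, IsTest ι n φ ∧ IsNTUB ι n P0 φ) ↔
      ∃ β : MvPolynomial ι ℝ, β.totalDegree ≤ n ∧
        (∃ π ∈ probSimplex ι, eval π β ≠ 0) ∧
        (∀ π ∈ P0, eval π β = 0) ∧
        (∀ π ∈ probSimplex ι \ P0, 0 ≤ eval π β)) ∧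
    ((∃ φ, IsTest ι n φ ∧ IsSUB ι n P0 φ) ↔
      ∃ β : MvPolynomial ι ℝ, β.totalDegree ≤ n ∧
        (∃ π ∈ probSimplex ι, eval π β ≠ 0) ∧
        (∀ π ∈ P0, eval π β = 0) ∧
        (∀ π ∈ probSimplex ι \ P0, 0 < eval π β)) := by
  refine ⟨⟨?_, ?_⟩, ⟨?_, ?_⟩⟩
  · rintro ⟨φ, -, hφ⟩
    obtain ⟨β, hdeg, hzero, hβ⟩ := hφ.1.exists_hasAffinePower hne hP0
    obtain ⟨hnontrivial, hnonneg⟩ := (hβ.isNTUB_iff hsub hne hzero).1 hφ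
    exact ⟨β, hdeg, hnontrivial, hzero, hnonneg⟩
  · rintro ⟨β, hdeg, hnontrivial, hzero, hnonneg⟩
    obtain ⟨φ, htest, hβ⟩ := exists_isTest_hasAffinePower hdeg
    exact ⟨φ, htest, (hβ.isNTUB_iff hsub hne hzero).2 ⟨hnontrivial, hnonneg⟩⟩
  · rintro ⟨φ, -, hφ⟩
    have hunbiased : Unbiased ι n P0 φ := fun π₀ hπ₀ π hπ ↦ (hφ π₀ hπ₀ π hπ).le
    obtain ⟨β, hdeg, hzero, hβ⟩ := hunbiased.exists_hasAffinePower hne hP0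
    have hpos := (hβ.isSUB_iff hsub hne hzero).1 hφ
    obtain ⟨π, hπ⟩ := closure_nonempty_iff.1 (hne.mono hP0)
    exact ⟨β, hdeg, ⟨π, hπ.1, (hpos π hπ).ne'⟩, hzero, hpos⟩
  · rintro ⟨β, hdeg, -, hzero, hpos⟩
    obtain ⟨φ, htest, hβ⟩ := exists_isTest_hasAffinePower hdeg
    exact ⟨φ, htest, (hβ.isSUB_iff hsub hne hzero).2 hpos⟩

end UnbiasedTests

/-- existence criteria for NTUB and SUB tests of an algebraic null hypothesis. -/
theorem stmt_6 (k n : ℕ) (hk : 2 ≤ k) (hn : 1 ≤ n)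
    (G : Set (MvPolynomial (Fin k) ℝ))
    (P0 : Set (Fin k → ℝ))
    (hP0 : P0 = probSimplex (Fin k) ∩ {π | ∀ g ∈ G, MvPolynomial.eval π g = 0})
    (hne : P0.Nonempty) (hneq : P0 ≠ probSimplex (Fin k)) :
    ((∃ φ, IsTest (Fin k) n φ ∧ IsNTUB (Fin k) n P0 φ) ↔
      ∃ β : MvPolynomial (Fin k) ℝ, β.totalDegree ≤ n ∧
        (∃ π ∈ probSimplex (Fin k), MvPolynomial.eval π β ≠ 0) ∧
        (∀ π ∈ P0, MvPolynomial.eval π β = 0) ∧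
        (∀ π ∈ probSimplex (Fin k) \ P0, 0 ≤ MvPolynomial.eval π β)) ∧
    ((∃ φ, IsTest (Fin k) n φ ∧ IsSUB (Fin k) n P0 φ) ↔
      ∃ β : MvPolynomial (Fin k) ℝ, β.totalDegree ≤ n ∧
        (∃ π ∈ probSimplex (Fin k), MvPolynomial.eval π β ≠ 0) ∧
        (∀ π ∈ P0, MvPolynomial.eval π β = 0) ∧
        (∀ π ∈ probSimplex (Fin k) \ P0, 0 < MvPolynomial.eval π β)) := by
  subst hP0
  exact stmt_6_general n Set.inter_subset_left hne
    (inter_zeros_subset_closure_diff (convex_probSimplex (Fin k)) G hneq)
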